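/- arXiv:1203.2131 — 5 statements merged into one kernel-verified Lean document; each statement's English description precedes it below -/
import Mathlib

section
/- Let n ≥ 2 and let H = {x ∈ ℝⁿ : x₀ = 0}. For t ∈ H and φ > 0 let S(φ,t) denote the sphere in ℝⁿ with center t + (φ/2)e₀ and radius φ/2 (where e₀ is the first standard basis vector), i.e. the kissing sphere of diameter φ tangent to H at t. Then for any o ∈ H with o ≠ t and any r > 0, the image of S(φ,t) under the inversion ι_{o,r} is the sphere S(φ′, t′), where φ′ = r²φ/‖o − t‖² and t′ = ι_{o,r}(t) = o + (r²/‖t − o‖²)(t − o); in particular ‖o − t′‖ = r²/‖o − t‖. -/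
/-!
Translate so that the center of inversion is the origin, and write `y = x - o`, `s = t - o`. As `s`
is orthogonal to `e₀`, the kissing sphere `S(φ,t)` is the quadric
`‖y‖² - 2⟪y, s⟫ + ‖s‖² = φ ⟪y, e₀⟫` (`mem_kissing_sphere_iff`). Substituting
`y ↦ (r²/‖y‖²) y`, `s ↦ (r²/‖s‖²) s`, `φ ↦ r²φ/‖s‖²` multiplies this equation by
`r⁴/(‖y‖²‖s‖²)`, so `x ∈ S(φ,t)` if and only if `ι x ∈ S(φ',t')` (`kissing_sphere_equation_iff`).
Since `ι` is an involution (with the convention `ι o = o`), images and preimages under it agree,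
and the claim follows.
-/

/-- The inversion with center `o` and radius `r`. -/
noncomputable def inversion {n : ℕ} (o : EuclideanSpace ℝ (Fin n)) (r : ℝ)
    (x : EuclideanSpace ℝ (Fin n)) : EuclideanSpace ℝ (Fin n) :=
  o + (r ^ 2 / ‖x - o‖ ^ 2) • (x - o)

open scoped RealInnerProductSpace

theorem inversion_eq_euclideanGeometry {n : ℕ} (o : EuclideanSpace ℝ (Fin n)) (r : ℝ) :
    inversion o r = EuclideanGeometry.inversion o r := by
  ext1 x
  simp [inversion, EuclideanGeometry.inversion, dist_eq_norm, div_pow, add_comm]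

/-- Equation of the sphere of diameter `φ` touching, at `t`, the hyperplane through `o` and `t`
with unit normal `e`, in coordinates centered at `o`. -/
theorem mem_kissing_sphere_iff {E : Type*} [NormedAddCommGroup E] [InnerProductSpace ℝ E]
    {e o t : E} (he : ‖e‖ = 1) (hte : ⟪t - o, e⟫ = 0) {φ : ℝ} (hφ : 0 ≤ φ) (x : E) :
    x ∈ Metric.sphere (t + (φ / 2) • e) (φ / 2) ↔
      ‖x - o‖ ^ 2 - 2 * ⟪x - o, t - o⟫ + ‖t - o‖ ^ 2 = φ * ⟪x - o, e⟫ := by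
  have hx : x - (t + (φ / 2) • e) = ((x - o) - (t - o)) - (φ / 2) • e := by abel
  have hsq : ‖x - (t + (φ / 2) • e)‖ ^ 2 =
      ‖x - o‖ ^ 2 - 2 * ⟪x - o, t - o⟫ + ‖t - o‖ ^ 2 - φ * ⟪x - o, e⟫ + (φ / 2) ^ 2 := by
    rw [hx, norm_sub_sq_real, norm_sub_sq_real (x - o), real_inner_smul_right,
      inner_sub_left (x - o), hte, norm_smul, he, mul_one, Real.norm_eq_abs, sq_abs]
    ring
  rw [mem_sphere_iff_norm, ← sq_eq_sq₀ (norm_nonneg _) (by positivity), hsq]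
  constructor <;> intro h <;> linarith

/-- Inversion of radius `r` about the origin carries the equation of a kissing sphere to that of
its image. For `y = 0` both sides are false, since `s ≠ 0`. -/
theorem kissing_sphere_equation_iff {E : Type*} [NormedAddCommGroup E] [InnerProductSpace ℝ E]
    {e s : E} (hs : s ≠ 0) {r : ℝ} (hr : r ≠ 0) (φ : ℝ) (y : E) :
    ‖y‖ ^ 2 - 2 * ⟪y, s⟫ + ‖s‖ ^ 2 = φ * ⟪y, e⟫ ↔
      ‖(r ^ 2 / ‖y‖ ^ 2) • y‖ ^ 2 - 2 * ⟪(r ^ 2 / ‖y‖ ^ 2) • y, (r ^ 2 / ‖s‖ ^ 2) • s⟫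
          + ‖(r ^ 2 / ‖s‖ ^ 2) • s‖ ^ 2
        = (r ^ 2 * φ / ‖s‖ ^ 2) * ⟪(r ^ 2 / ‖y‖ ^ 2) • y, e⟫ := by
  have hs' : ‖s‖ ≠ 0 := norm_ne_zero_iff.mpr hs
  rcases eq_or_ne y 0 with rfl | hy
  · simp [hs, hr, norm_smul]
  have hy' : ‖y‖ ≠ 0 := norm_ne_zero_iff.mpr hy
  have hk : r ^ 4 / (‖y‖ ^ 2 * ‖s‖ ^ 2) ≠ 0 := by positivity
  simp only [norm_smul, mul_pow, Real.norm_eq_abs, sq_abs, real_inner_smul_left,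
    real_inner_smul_right]
  rw [← mul_right_inj' hk]
  have h₁ : r ^ 4 / (‖y‖ ^ 2 * ‖s‖ ^ 2) * (‖y‖ ^ 2 - 2 * ⟪y, s⟫ + ‖s‖ ^ 2) =
      (r ^ 2 / ‖y‖ ^ 2) ^ 2 * ‖y‖ ^ 2 - 2 * (r ^ 2 / ‖y‖ ^ 2 * (r ^ 2 / ‖s‖ ^ 2 * ⟪y, s⟫))
        + (r ^ 2 / ‖s‖ ^ 2) ^ 2 * ‖s‖ ^ 2 := by
    field_simp
    ring
  have h₂ : r ^ 4 / (‖y‖ ^ 2 * ‖s‖ ^ 2) * (φ * ⟪y, e⟫) =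
      r ^ 2 * φ / ‖s‖ ^ 2 * (r ^ 2 / ‖y‖ ^ 2 * ⟪y, e⟫) := by
    field_simp
  grind


/-- the image of the kissing sphere `S(φ,t)` (tangent to the hyperplane
`x₀ = 0` at `t`, of diameter `φ`) under the inversion `ι_{o,r}` with `o` on the
hyperplane, `o ≠ t`, is the kissing sphere `S(φ', t')` with
`φ' = r²φ/‖o − t‖²` and `t' = ι_{o,r}(t)`; in particular `‖o − t'‖ = r²/‖o − t‖`. -/
theorem kissing_sphere_inversion (n : ℕ) (hn : 2 ≤ n)
    (t o : EuclideanSpace ℝ (Fin n))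
    (ht : t ⟨0, by omega⟩ = 0) (ho : o ⟨0, by omega⟩ = 0) (hot : o ≠ t)
    (φ r : ℝ) (hφ : 0 < φ) (hr : 0 < r) :
    (inversion o r) ''
        (Metric.sphere (t + (φ / 2) • EuclideanSpace.single (⟨0, by omega⟩ : Fin n) (1 : ℝ)) (φ / 2))
      = Metric.sphere
          (inversion o r t +
            ((r ^ 2 * φ / ‖o - t‖ ^ 2) / 2) • EuclideanSpace.single (⟨0, by omega⟩ : Fin n) (1 : ℝ))
          ((r ^ 2 * φ / ‖o - t‖ ^ 2) / 2)
    ∧ inversion o r t = o + (r ^ 2 / ‖t - o‖ ^ 2) • (t - o)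
    ∧ ‖o - inversion o r t‖ = r ^ 2 / ‖o - t‖ := by
  have hr₀ : r ≠ 0 := hr.ne'
  have hs : t - o ≠ 0 := sub_ne_zero.mpr hot.symm
  refine ⟨?_, rfl, ?_⟩
  · have hinv : Function.Involutive (inversion o r) := by
      rw [inversion_eq_euclideanGeometry]
      exact EuclideanGeometry.inversion_involutive o hr₀
    have hsub : ∀ x, inversion o r x - o = (r ^ 2 / ‖x - o‖ ^ 2) • (x - o) := fun x => by
      simp [inversion]
    set e : EuclideanSpace ℝ (Fin n) := EuclideanSpace.single (⟨0, by omega⟩ : Fin n) (1 : ℝ)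
      with he_def
    have he : ‖e‖ = 1 := by simp [he_def]
    have hte : ⟪t - o, e⟫ = 0 := by simp [he_def, EuclideanSpace.inner_single_right, ht, ho]
    have hte' : ⟪inversion o r t - o, e⟫ = 0 := by
      rw [hsub, real_inner_smul_left, hte, mul_zero]
    have key : ∀ x, x ∈ Metric.sphere (t + (φ / 2) • e) (φ / 2) ↔ inversion o r x ∈
        Metric.sphere (inversion o r t + ((r ^ 2 * φ / ‖o - t‖ ^ 2) / 2) • e)
          ((r ^ 2 * φ / ‖o - t‖ ^ 2) / 2) := fun x => by
      rw [mem_kissing_sphere_iff he hte hφ.le, mem_kissing_sphere_iff he hte' (by positivity),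
        hsub, hsub, norm_sub_rev o t]
      exact kissing_sphere_equation_iff hs hr₀ φ (x - o)
    rw [Set.image_eq_preimage_of_inverse hinv.leftInverse hinv.rightInverse]
    ext x
    rw [Set.mem_preimage, key, hinv x]
  · rw [inversion_eq_euclideanGeometry, ← dist_eq_norm, ← dist_eq_norm]
    exact EuclideanGeometry.dist_center_inversion o t r
end

section
/- Let n ≥ 2. For t ∈ ℝ^{n−1} and φ > 0, let S(φ,t) ⊆ ℝⁿ = ℝ × ℝ^{n−1} be the sphere with center ((φ/2), t) and radius φ/2 (the kissing sphere of diameter φ tangent to the hyperplane x₀ = 0 at t). Let (φ_p, t_p) ≠ (φ_q, t_q). Then the intersection S(φ_p,t_p) ∩ S(φ_q,t_q) is a singleton {x} with x₀ > 0 if and only if ‖t_p − t_q‖² = φ_p·φ_q. (I.e., two distinct kissing spheres are tangent to each other—at a point not on the reference hyperplane—exactly when their distance d_K = ‖t_p − t_q‖/√(φ_pφ_q) equals 1.) -/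
/-!
In coordinates, `(a, u)` lies on the sphere of diameter `φ` kissing at `t` iff
`a² + ‖u - t‖² = φ a`.

If the intersection is a single point `x`, then `x` is fixed by the reflection in the line through
the two centers, since that reflection preserves both spheres; hence `x` lies on the line
(`exists_eq_of_unique`). Writing `x = c_p + k (c_q - c_p)` and comparing the two radii leaves two
cases: external tangency, which is `‖t_p - t_q‖² = φ_p φ_q`, and internal tangency, which forces
`x₀ = 0` (`norm_sq_of_collinear`).

Conversely, if `‖t_p - t_q‖² = φ_p φ_q`, the point dividing the segment of centers in the ratio
`φ_p : φ_q` is on both spheres, and the squared distance from it to any common point is a linear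
combination of the sphere equations, so it vanishes (`mem_both_iff`).
-/

section Kissing

variable {E : Type*} [NormedAddCommGroup E] [InnerProductSpace ℝ E]

lemma mem_kissing_iff {φ : ℝ} (hφ : 0 < φ) (t : E) (x : WithLp 2 (ℝ × E)) :
    x ∈ Metric.sphere ((WithLp.equiv 2 (ℝ × E)).symm (φ / 2, t)) (φ / 2) ↔
      x.fst ^ 2 + ‖x.snd - t‖ ^ 2 = φ * x.fst := by
  rw [mem_sphere_iff_norm, ← sq_eq_sq₀ (norm_nonneg _) (by positivity),
    WithLp.prod_norm_sq_eq_of_L2]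
  simp only [WithLp.sub_fst, WithLp.sub_snd, Real.norm_eq_abs, sq_abs]
  change (x.fst - φ / 2) ^ 2 + ‖x.snd - t‖ ^ 2 = _ ↔ _
  constructor <;> intro h <;> linear_combination h

/-- A unique common point `(a, u)` of two distinct kissing spheres lies on the line through their
centers: it is fixed by the reflection in that line. -/
lemma exists_eq_of_unique {φp φq : ℝ} {tp tq : E} (hne : (φp, tp) ≠ (φq, tq)) {a : ℝ} {u : E}
    (hp : a ^ 2 + ‖u - tp‖ ^ 2 = φp * a) (hq : a ^ 2 + ‖u - tq‖ ^ 2 = φq * a)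
    (huniq : ∀ (b : ℝ) (v : E), b ^ 2 + ‖v - tp‖ ^ 2 = φp * b →
      b ^ 2 + ‖v - tq‖ ^ 2 = φq * b → b = a ∧ v = u) :
    ∃ k : ℝ, a = φp / 2 + k * ((φq - φp) / 2) ∧ u - tp = k • (tq - tp) := by
  obtain ⟨v, rfl⟩ : ∃ v, u = tp + v := ⟨u - tp, by abel⟩
  obtain ⟨w, rfl⟩ : ∃ w, tq = tp + w := ⟨tq - tp, by abel⟩
  simp only [add_sub_cancel_left, add_sub_add_left_eq_sub] at *
  rw [norm_sub_sq_real] at hq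
  set δ := (φq - φp) / 2 with hδ
  have hN : δ ^ 2 + ‖w‖ ^ 2 ≠ 0 := by
    intro h0
    have h1 : δ = 0 := by nlinarith [sq_nonneg δ, sq_nonneg ‖w‖]
    have h2 : w = 0 := by
      rw [← norm_eq_zero]; nlinarith [sq_nonneg δ, sq_nonneg ‖w‖]
    apply hne
    rw [h2, add_zero, show φq = φp by linarith]
  -- With `z = x - c_p` and `e = c_q - c_p`, the reflected point is `c_p - z + c • e`,
  -- where `c = 2⟪z, e⟫ / ‖e‖²`.
  obtain ⟨c, hc⟩ : ∃ c : ℝ, c * (δ ^ 2 + ‖w‖ ^ 2) = 2 * ((a - φp / 2) * δ + inner ℝ v w) :=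
    ⟨_, div_mul_cancel₀ _ hN⟩
  obtain ⟨h1, h2⟩ := huniq (φp - a + c * δ) (tp + (c • w - v))
    (by
      rw [add_sub_cancel_left, norm_sub_sq_real, norm_smul, mul_pow, inner_smul_left,
        real_inner_comm, Real.norm_eq_abs, sq_abs]
      simp only [conj_trivial]
      linear_combination hp + c * hc)
    (by
      rw [show tp + (c • w - v) - (tp + w) = (c - 1) • w - v by module,
        norm_sub_sq_real, norm_smul, mul_pow, inner_smul_left,
        real_inner_comm, Real.norm_eq_abs, sq_abs]
      simp only [conj_trivial]
      linear_combination hq + (c - 2) * hc)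
  have h3 : c • w - v = v := add_left_cancel h2
  refine ⟨c / 2, by linarith, ?_⟩
  have h4 : c • w = (2 : ℝ) • v := by rw [two_smul]; exact sub_eq_iff_eq_add.mp h3
  rw [div_eq_inv_mul, mul_smul, h4, smul_smul]
  norm_num

/-- If the common point `c_p + k (c_q - c_p)` is off the hyperplane, the tangency is external. Here
`a` is its height and `W` is the squared distance between the two contact points. -/
lemma norm_sq_of_collinear {φp φq a k W : ℝ} (hφp : 0 < φp) (ha : 0 < a)
    (hak : a = φp / 2 + k * ((φq - φp) / 2))
    (hp : a ^ 2 + k ^ 2 * W = φp * a) (hq : a ^ 2 + (k - 1) ^ 2 * W = φq * a) :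
    W = φp * φq := by
  have e1 : k ^ 2 * ((φq - φp) ^ 2 / 4 + W) = φp ^ 2 / 4 := by
    subst hak; linear_combination hp
  have e2 : (k - 1) ^ 2 * ((φq - φp) ^ 2 / 4 + W) = φq ^ 2 / 4 := by
    subst hak; linear_combination hq
  have e3 : (k * φq - (1 - k) * φp) * (k * φq + (1 - k) * φp) = 0 := by
    linear_combination 4 * (k - 1) ^ 2 * e1 - 4 * k ^ 2 * e2
  rcases mul_eq_zero.mp e3 with h | h
  · have hk : k * (φp + φq) = φp := by linear_combination h
    have hk2 : φp ^ 2 * (W - φp * φq) = 0 := by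
      linear_combination (φp + φq) ^ 2 * e1
        - (k * (φp + φq) + φp) * ((φq - φp) ^ 2 / 4 + W) * hk
    rcases mul_eq_zero.mp hk2 with h' | h'
    · exact absurd h' (by positivity)
    · linarith
  -- internal tangency: the common point would lie on the hyperplane
  · exfalso; linarith

/-- External tangency: the point dividing the segment of centers in the ratio `φp : φq` is the only
common point. -/
lemma mem_both_iff {φp φq : ℝ} (hφp : 0 < φp) (hφq : 0 < φq) {tp tq : E}
    (hW : ‖tp - tq‖ ^ 2 = φp * φq) (a : ℝ) (u : E) :
    (a ^ 2 + ‖u - tp‖ ^ 2 = φp * a ∧ a ^ 2 + ‖u - tq‖ ^ 2 = φq * a) ↔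
      (a = φp / (φp + φq) * φq ∧ u = tp + (φp / (φp + φq)) • (tq - tp)) := by
  obtain ⟨v, rfl⟩ : ∃ v, u = tp + v := ⟨u - tp, by abel⟩
  obtain ⟨w, rfl⟩ : ∃ w, tq = tp + w := ⟨tq - tp, by abel⟩
  obtain ⟨k, hk⟩ : ∃ k, k = φp / (φp + φq) := ⟨_, rfl⟩
  have hk' : k * (φp + φq) = φp := by rw [hk]; field_simp
  rw [← hk]
  simp only [add_sub_cancel_left, add_sub_add_left_eq_sub, sub_add_cancel_left, norm_neg,
    add_right_inj] at *
  constructor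
  · rintro ⟨hp, hq⟩
    rw [norm_sub_sq_real] at hq
    have hsum : (a - k * φq) ^ 2 + ‖v - k • w‖ ^ 2 = 0 := by
      rw [norm_sub_sq_real, norm_smul, mul_pow, inner_smul_right, Real.norm_eq_abs, sq_abs]
      linear_combination (1 - k) * hp + k * hq + (k ^ 2 - k) * hW + (k * φq - a) * hk'
    constructor
    · nlinarith [sq_nonneg (a - k * φq), sq_nonneg ‖v - k • w‖]
    · rw [← sub_eq_zero, ← norm_eq_zero]
      nlinarith [sq_nonneg (a - k * φq), sq_nonneg ‖v - k • w‖]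
  · rintro ⟨rfl, rfl⟩
    rw [show k • w - w = (k - 1) • w by module]
    simp only [norm_smul, mul_pow, hW, Real.norm_eq_abs, sq_abs]
    constructor
    · linear_combination k * φq * hk'
    · linear_combination (k - 1) * φq * hk'

end Kissing


/-- two distinct kissing spheres (in `ℝⁿ = ℝ × ℝ^{n−1}` with the
Euclidean (ℓ²) product norm) are tangent to each other at a point not on the
reference hyperplane `x₀ = 0` — i.e. their intersection is a singleton `{x}`
with `x₀ > 0` — exactly when `‖t_p − t_q‖² = φ_p φ_q`. -/
theorem kissing_spheres_tangent_iff (n : ℕ) (hn : 2 ≤ n)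
    (φp φq : ℝ) (hφp : 0 < φp) (hφq : 0 < φq)
    (tp tq : EuclideanSpace ℝ (Fin (n - 1)))
    (hne : (φp, tp) ≠ (φq, tq)) :
    (∃ x : WithLp 2 (ℝ × EuclideanSpace ℝ (Fin (n - 1))),
        0 < ((WithLp.equiv 2 (ℝ × EuclideanSpace ℝ (Fin (n - 1)))) x).1 ∧
        Metric.sphere
            ((WithLp.equiv 2 (ℝ × EuclideanSpace ℝ (Fin (n - 1)))).symm (φp / 2, tp)) (φp / 2) ∩
          Metric.sphere
            ((WithLp.equiv 2 (ℝ × EuclideanSpace ℝ (Fin (n - 1)))).symm (φq / 2, tq)) (φq / 2)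
          = {x}) ↔
      ‖tp - tq‖ ^ 2 = φp * φq := by
  simp only [Set.eq_singleton_iff_unique_mem, Set.mem_inter_iff, mem_kissing_iff hφp,
    mem_kissing_iff hφq]
  constructor
  · rintro ⟨x, hx0, ⟨hp, hq⟩, huniq⟩
    replace hx0 : 0 < x.fst := hx0
    obtain ⟨k, hak, hk⟩ := exists_eq_of_unique hne hp hq fun b v h1 h2 => by
      have h := huniq (WithLp.toLp 2 (b, v)) ⟨h1, h2⟩
      exact ⟨congrArg WithLp.fst h, congrArg WithLp.snd h⟩
    have hk' : x.snd - tq = (k - 1) • (tq - tp) := by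
      rw [sub_smul, ← hk]; module
    rw [hk, norm_smul, mul_pow, Real.norm_eq_abs, sq_abs] at hp
    rw [hk', norm_smul, mul_pow, Real.norm_eq_abs, sq_abs] at hq
    rw [norm_sub_rev]
    exact norm_sq_of_collinear hφp hx0 hak hp hq
  · intro hW
    refine ⟨WithLp.toLp 2 (φp / (φp + φq) * φq, tp + (φp / (φp + φq)) • (tq - tp)), ?_,
      (mem_both_iff hφp hφq hW _ _).2 ⟨rfl, rfl⟩, fun y hy => ?_⟩
    · change 0 < φp / (φp + φq) * φq
      positivity
    · obtain ⟨h1, h2⟩ := (mem_both_iff hφp hφq hW _ _).1 hy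
      exact WithLp.ofLp_injective 2 (Prod.ext h1 h2)
end

section
/- Let n ≥ 2 and m ≥ 2. Let d : Fin m → Fin m → ℝ be symmetric with d i i = 0 for all i and d i j > 0 for all i ≠ j, and let D be the m × m real symmetric matrix with D i j = (d i j)². Then the following are equivalent: (i) there exists σ : Fin m → 𝕂ⁿ such that d_K(σ i, σ j) = d i j for all i, j; (iii) D has exactly one positive eigenvalue and at most n negative eigenvalues (eigenvalues counted with multiplicity). -/
/-!
The space `𝕂ⁿ` is a model of the positive half of the light cone of Minkowski space of
signature `(1, n)`. On `ℝ × ℝ × ℝ^{n-1}` take the form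
`B((a, c, s), (a', c', s')) = a c' + c a' - 2 ⟪s, s'⟫`. Sending the sphere `(φ, t)` to
`φ⁻¹ (1, ‖t‖², t)` and the plane `h` to `(0, h, 0)` gives isotropic vectors with
`d_K² = B` (`KSphere.dK_sq`), so an embedding of `d` exhibits `D` as a Gram matrix of `B`.

If `D` is such a Gram matrix, the spans of the positive and of the negative eigenvectors inject into
spaces of dimension `1` and `n` (`card_le_finrank_of_form`). A positive eigenvalue exists since `D`
has trace zero and is nonzero.

Conversely, the spectral decomposition writes `D i j = p i * p j - ⟪q i, q j⟫` with `p i` real and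
`q i ∈ ℝⁿ` (`exists_gram_of_card`). The vectors `(p i, q i)` are isotropic because `D i i = 0`, and
the positivity of the off-diagonal entries puts all of them in the same half of the light cone by
the Cauchy-Schwarz inequality. After a global change of sign they come from kissing spheres
(`exists_kSphere`).
-/

/-- A kissing sphere in `ℝⁿ`: either a sphere of diameter `φ > 0` in the half-space
`x₀ ≥ 0` tangent to the hyperplane `x₀ = 0` at `t ∈ ℝ^{n−1}`, or the hyperplane
`x₀ = h` for some `h > 0`. -/
inductive KSphere (n : ℕ) where
  | sphere (φ : ℝ) (t : EuclideanSpace ℝ (Fin (n - 1))) (hφ : 0 < φ) : KSphere n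
  | plane (h : ℝ) (hh : 0 < h) : KSphere n

/-- The distance `d_K` between kissing spheres. -/
noncomputable def dK {n : ℕ} : KSphere n → KSphere n → ℝ
  | .sphere φ t _, .sphere φ' t' _ => ‖t - t'‖ / Real.sqrt (φ * φ')
  | .sphere φ _ _, .plane h _ => Real.sqrt (h / φ)
  | .plane h _, .sphere φ _ _ => Real.sqrt (h / φ)
  | .plane _ _, .plane _ _ => 0

open Matrix in
/-- If the quadratic form of `s • D` is nonpositive on the kernel of a linear map `L` to `V`, then
at most `dim V` eigenvalues of `D` have the sign of `s`: `L` is injective on the span of the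
corresponding eigenvectors. -/
theorem card_le_finrank_of_form {m : ℕ} {D : Matrix (Fin m) (Fin m) ℝ} (hD : D.IsHermitian)
    (s : ℝ) (S : Finset (Fin m)) (hS : ∀ k ∈ S, 0 < s * hD.eigenvalues k)
    {V : Type*} [AddCommGroup V] [Module ℝ V] [FiniteDimensional ℝ V]
    (L : (Fin m → ℝ) →ₗ[ℝ] V) (hL : ∀ x, L x = 0 → s * (x ⬝ᵥ D *ᵥ x) ≤ 0) :
    S.card ≤ Module.finrank ℝ V := by
  set u : Fin m → Fin m → ℝ := fun k => ⇑(hD.eigenvectorBasis k) with hu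
  have horth : ∀ k l, u k ⬝ᵥ u l = if k = l then 1 else 0 := by
    intro k l
    have h := orthonormal_iff_ite.mp hD.eigenvectorBasis.orthonormal k l
    rw [← h, EuclideanSpace.inner_eq_star_dotProduct, dotProduct_comm]
    simp [hu]
  have hmul : ∀ k, D *ᵥ u k = hD.eigenvalues k • u k := hD.mulVec_eigenvectorBasis
  have hli : LinearIndependent ℝ (fun k : S => L (u k)) := by
    rw [Fintype.linearIndependent_iff]
    intro g hg
    have hx : L (∑ k : S, g k • u k) = 0 := by simpa using hg
    have h := hL _ hx
    have hform : (∑ k : S, g k • u k) ⬝ᵥ D *ᵥ (∑ k : S, g k • u k)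
        = ∑ k : S, g k ^ 2 * hD.eigenvalues k := by
      rw [mulVec_sum]
      simp only [mulVec_smul, hmul, sum_dotProduct, dotProduct_sum, smul_dotProduct,
        dotProduct_smul, horth, smul_eq_mul]
      refine Finset.sum_congr rfl fun k _ => ?_
      rw [Finset.sum_eq_single k]
      · simp; ring
      · intro l _ hl
        have : (l : Fin m) ≠ k := fun h => hl (Subtype.ext h)
        simp [this]
      · simp
    rw [hform, Finset.mul_sum] at h
    have hnn : ∀ k ∈ (Finset.univ : Finset S), 0 ≤ s * (g k ^ 2 * hD.eigenvalues k) := by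
      intro k _
      have := mul_nonneg (sq_nonneg (g k)) (hS k k.2).le
      linarith
    have hz := (Finset.sum_eq_zero_iff_of_nonneg hnn).mp (le_antisymm h (Finset.sum_nonneg hnn))
    intro k
    have h0 : g k ^ 2 * (s * hD.eigenvalues k) = 0 := by
      have := hz k (Finset.mem_univ k)
      linarith
    simpa [(hS k k.2).ne'] using h0
  simpa using hli.fintype_card_le_finrank

namespace KSphere

variable {n : ℕ}

/-- The first null coordinate of the light vector of a kissing sphere. -/
noncomputable def lightA : KSphere n → ℝ
  | .sphere φ _ _ => φ⁻¹
  | .plane _ _ => 0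

/-- The second null coordinate of the light vector of a kissing sphere. -/
noncomputable def lightC : KSphere n → ℝ
  | .sphere φ t _ => φ⁻¹ * ‖t‖ ^ 2
  | .plane h _ => h

/-- The spatial coordinates of the light vector of a kissing sphere. -/
noncomputable def lightS : KSphere n → EuclideanSpace ℝ (Fin (n - 1))
  | .sphere φ t _ => φ⁻¹ • t
  | .plane _ _ => 0

theorem dK_sq (σ τ : KSphere n) :
    dK σ τ ^ 2 = σ.lightA * τ.lightC + σ.lightC * τ.lightA
      - 2 * inner ℝ σ.lightS τ.lightS := by
  cases σ with
  | sphere φ t hφ =>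
    cases τ with
    | sphere φ' t' hφ' =>
      simp only [dK, lightA, lightC, lightS, div_pow, Real.sq_sqrt (mul_pos hφ hφ').le,
        norm_sub_sq_real, real_inner_smul_left, real_inner_smul_right]
      field_simp
      ring
    | plane h hh =>
      simp only [dK, lightA, lightC, lightS, Real.sq_sqrt (div_pos hh hφ).le, inner_zero_right]
      field_simp
      ring
  | plane h hh =>
    cases τ with
    | sphere φ' t' hφ' =>
      simp only [dK, lightA, lightC, lightS, Real.sq_sqrt (div_pos hh hφ').le, inner_zero_left]
      field_simp
      ring
    | plane h' hh' => simp [dK, lightA, lightC, lightS]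

end KSphere

theorem dK_nonneg {n : ℕ} (σ τ : KSphere n) : 0 ≤ dK σ τ := by
  cases σ <;> cases τ <;> simp only [dK] <;> positivity

/-- The quadratic form of a Gram matrix of the Minkowski form, in null coordinates. -/
theorem gram_form {m : ℕ} {E : Type*} [NormedAddCommGroup E] [InnerProductSpace ℝ E]
    {D : Matrix (Fin m) (Fin m) ℝ} {a c : Fin m → ℝ} {s : Fin m → E}
    (h : ∀ i j, D i j = a i * c j + c i * a j - 2 * inner ℝ (s i) (s j)) (x : Fin m → ℝ) :
    dotProduct x (D.mulVec x) = 2 * ((∑ i, x i * a i) * ∑ i, x i * c i)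
      - 2 * ‖∑ i, x i • s i‖ ^ 2 := by
  have h1 : (∑ i, x i * a i) * ∑ i, x i * c i = ∑ i, ∑ j, (x i * a i) * (x j * c j) :=
    Finset.sum_mul_sum _ _ _ _
  have h2 : (∑ i, x i * a i) * ∑ i, x i * c i = ∑ i, ∑ j, (x i * c i) * (x j * a j) := by
    rw [mul_comm]; exact Finset.sum_mul_sum _ _ _ _
  have h3 : ‖∑ i, x i • s i‖ ^ 2 = ∑ i, ∑ j, x i * (x j * inner ℝ (s i) (s j)) := by
    rw [← real_inner_self_eq_norm_sq]
    simp only [sum_inner, inner_sum, real_inner_smul_left, real_inner_smul_right]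
    refine Finset.sum_congr rfl fun i _ => Finset.sum_congr rfl fun j _ => ?_
    rw [real_inner_comm]
  rw [two_mul ((∑ i, x i * a i) * _)]
  nth_rewrite 1 [h1]
  rw [h2, h3]
  simp only [dotProduct, Matrix.mulVec, Finset.mul_sum, ← Finset.sum_add_distrib,
    ← Finset.sum_sub_distrib, h]
  refine Finset.sum_congr rfl fun i _ => Finset.sum_congr rfl fun j _ => ?_
  ring

/-- The spectral decomposition of a matrix with one positive and at most `N` negative eigenvalues,
as a Gram matrix in Minkowski space of signature `(1, N)`. -/
theorem exists_gram_of_card {m N : ℕ} {D : Matrix (Fin m) (Fin m) ℝ} (hD : D.IsHermitian)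
    (h1 : (Finset.univ.filter fun i => 0 < hD.eigenvalues i).card = 1)
    (h2 : (Finset.univ.filter fun i => hD.eigenvalues i < 0).card ≤ N) :
    ∃ (p : Fin m → ℝ) (q : Fin m → Fin N → ℝ),
      ∀ i j, D i j = p i * p j - ∑ a, q i a * q j a := by
  obtain ⟨k₀, hk₀⟩ := Finset.card_eq_one.mp h1
  set u : Fin m → Fin m → ℝ := fun k => ⇑(hD.eigenvectorBasis k) with hu
  have hspec : ∀ i j, D i j = ∑ k, hD.eigenvalues k * (u k i * u k j) := by
    intro i j
    conv_lhs => rw [hD.spectral_theorem]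
    rw [Unitary.conjStarAlgAut_apply, Matrix.mul_apply]
    refine Finset.sum_congr rfl fun k _ => ?_
    simp [Matrix.mul_diagonal, Matrix.star_apply, hu]
    ring
  set T := Finset.univ.filter fun i => hD.eigenvalues i < 0 with hT
  obtain ⟨e⟩ : Nonempty (T ↪ Fin N) :=
    Function.Embedding.nonempty_of_card_le (by simpa using h2)
  refine ⟨fun i => √(hD.eigenvalues k₀) * u k₀ i,
    fun i => Function.extend e (fun k : T => √(-hD.eigenvalues k) * u k i) 0, fun i j => ?_⟩
  have hpos₀ : 0 < hD.eigenvalues k₀ := by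
    have : k₀ ∈ Finset.univ.filter fun i => 0 < hD.eigenvalues i := by simp [hk₀]
    simpa using this
  have hsum : ∑ a, Function.extend e (fun k : T => √(-hD.eigenvalues k) * u k i) 0 a *
      Function.extend e (fun k : T => √(-hD.eigenvalues k) * u k j) 0 a
      = ∑ k ∈ T, -(hD.eigenvalues k * (u k i * u k j)) := by
    rw [← Finset.sum_coe_sort T]
    symm
    refine Fintype.sum_of_injective e e.injective _ _ (fun a ha => ?_) fun k => ?_
    · rw [Function.extend_apply' _ _ _ (by simpa using ha)]
      simp
    · rw [e.injective.extend_apply, e.injective.extend_apply]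
      have hk : hD.eigenvalues k < 0 := (Finset.mem_filter.mp k.2).2
      have := Real.mul_self_sqrt (neg_pos.mpr hk).le
      linear_combination -(u k i * u k j) * this
  rw [hsum, hspec, Finset.sum_neg_distrib, sub_neg_eq_add]
  have hterm : ∀ k, hD.eigenvalues k * (u k i * u k j)
      = (if 0 < hD.eigenvalues k then hD.eigenvalues k * (u k i * u k j) else 0)
        + if hD.eigenvalues k < 0 then hD.eigenvalues k * (u k i * u k j) else 0 := by
    intro k
    rcases lt_trichotomy (hD.eigenvalues k) 0 with h | h | h
    · simp [h, h.not_gt]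
    · simp [h]
    · simp [h, h.not_gt]
  rw [Finset.sum_congr rfl fun k _ => hterm k, Finset.sum_add_distrib, ← Finset.sum_filter,
    ← Finset.sum_filter, hk₀, Finset.sum_singleton]
  have := Real.mul_self_sqrt hpos₀.le
  linear_combination -(u k₀ i * u k₀ j) * this

/-- Every point `(p, r, s)` with `p > 0` of the light cone `p² = r² + ‖s‖²` is the light vector of a
kissing sphere, up to a fixed factor. -/
theorem exists_kSphere {n : ℕ} (p r : ℝ) (s : EuclideanSpace ℝ (Fin (n - 1))) (hp : 0 < p)
    (h : p ^ 2 = r ^ 2 + ‖s‖ ^ 2) :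
    ∃ σ : KSphere n, σ.lightA = (p + r) / √2 ∧ σ.lightC = (p - r) / √2 ∧
      σ.lightS = (√2)⁻¹ • s := by
  have h2 : 0 < √(2 : ℝ) := by positivity
  have hr : |r| ≤ p := abs_le_of_sq_le_sq (by nlinarith [sq_nonneg ‖s‖]) hp.le
  rcases (show 0 ≤ p + r by linarith [neg_abs_le r]).eq_or_lt with ha | ha
  · have hs : s = 0 := by
      have : ‖s‖ ^ 2 = 0 := by
        have : r = -p := by linarith
        subst this
        linarith [neg_sq p]
      simpa using this
    refine ⟨.plane ((p - r) / √2) (div_pos (by linarith) h2), ?_, rfl, ?_⟩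
    · simp [KSphere.lightA, ← ha]
    · simp [KSphere.lightS, hs]
  · refine ⟨.sphere (√2 / (p + r)) ((p + r)⁻¹ • s) (div_pos h2 ha), ?_, ?_, ?_⟩
    · simp [KSphere.lightA]
    · simp only [KSphere.lightC, norm_smul, mul_pow, inv_div, norm_inv, Real.norm_eq_abs,
        abs_of_pos ha]
      field_simp
      linarith
    · simp only [KSphere.lightS, smul_smul]
      congr 1
      field_simp

/-- a finite distance space `(Fin m, d)` with positive off-diagonal
distances embeds isometrically into `(𝕂ⁿ, d_K)` iff its squared-distance matrix `D`
has exactly one positive eigenvalue and at most `n` negative eigenvalues. -/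
theorem embeddable_iff_eigenvalues (n m : ℕ) (hn : 2 ≤ n) (hm : 2 ≤ m)
    (d : Fin m → Fin m → ℝ) (hsym : ∀ i j, d i j = d j i)
    (hdiag : ∀ i, d i i = 0) (hpos : ∀ i j, i ≠ j → 0 < d i j)
    (D : Matrix (Fin m) (Fin m) ℝ) (hDdef : ∀ i j, D i j = (d i j) ^ 2)
    (hD : D.IsHermitian) :
    (∃ σ : Fin m → KSphere n, ∀ i j, dK (σ i) (σ j) = d i j) ↔
      ((Finset.univ.filter fun i => 0 < hD.eigenvalues i).card = 1 ∧
        (Finset.univ.filter fun i => hD.eigenvalues i < 0).card ≤ n) := by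
  constructor
  · rintro ⟨σ, hσ⟩
    set a := fun i => (σ i).lightA
    set c := fun i => (σ i).lightC
    set s := fun i => (σ i).lightS
    have hgram : ∀ i j, D i j = a i * c j + c i * a j - 2 * inner ℝ (s i) (s j) := by
      intro i j
      rw [hDdef, ← hσ, KSphere.dK_sq]
    have hform := gram_form hgram
    refine ⟨le_antisymm ?_ ?_, ?_⟩
    -- On the kernel of `x ↦ ∑ xᵢ (aᵢ + cᵢ)` the form is `-2 (∑ xᵢ aᵢ)² - 2 ‖∑ xᵢ sᵢ‖²`.
    · have := card_le_finrank_of_form hD 1 (Finset.univ.filter fun i => 0 < hD.eigenvalues i)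
        (by simp) (Fintype.linearCombination ℝ fun i => a i + c i) (fun x hx => by
          rw [hform]
          simp only [Fintype.linearCombination_apply, smul_eq_mul, mul_add,
            Finset.sum_add_distrib] at hx
          rw [eq_neg_of_add_eq_zero_right hx]
          nlinarith [sq_nonneg (∑ i, x i * a i), sq_nonneg ‖∑ i, x i • s i‖])
      simpa using this
    · rw [Nat.one_le_iff_ne_zero, Finset.card_ne_zero]
      by_contra hne
      rw [Finset.not_nonempty_iff_eq_empty, Finset.filter_eq_empty_iff] at hne
      have htr : ∑ i, hD.eigenvalues i = 0 := by
        have := hD.trace_eq_sum_eigenvalues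
        simp [Matrix.trace, hDdef, hdiag] at this
        exact this.symm
      have hz := (Finset.sum_eq_zero_iff_of_nonpos
        (fun i _ => not_lt.mp (hne (Finset.mem_univ i)))).mp htr
      have hD0 : D = 0 := hD.eigenvalues_eq_zero_iff.mp (funext fun i => hz i (Finset.mem_univ i))
      have h01 : (⟨0, by omega⟩ : Fin m) ≠ ⟨1, by omega⟩ := by simp
      have := hDdef ⟨0, by omega⟩ ⟨1, by omega⟩
      rw [hD0] at this
      exact (pow_pos (hpos _ _ h01) 2).ne this
    -- On the kernel of `x ↦ (∑ xᵢ (aᵢ - cᵢ), ∑ xᵢ sᵢ)` the form is `2 (∑ xᵢ aᵢ)²`.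
    · have := card_le_finrank_of_form hD (-1) (Finset.univ.filter fun i => hD.eigenvalues i < 0)
        (by simp) (Fintype.linearCombination ℝ fun i => (a i - c i, s i)) (fun x hx => by
          rw [hform]
          simp only [Fintype.linearCombination_apply, Prod.ext_iff, Prod.fst_sum, Prod.snd_sum,
            Prod.smul_mk, smul_eq_mul, mul_sub, Finset.sum_sub_distrib, Prod.fst_zero,
            Prod.snd_zero] at hx
          rw [hx.2, ← sub_eq_zero.mp hx.1, norm_zero]
          nlinarith [sq_nonneg (∑ i, x i * a i)])
      rw [Module.finrank_prod, Module.finrank_self, finrank_euclideanSpace_fin] at this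
      omega
  · rintro ⟨h1, h2⟩
    obtain ⟨p, q, hpq⟩ := exists_gram_of_card (N := (n - 1) + 1) hD h1 (by omega)
    have hDii : ∀ i, p i * p i = ∑ a, q i a * q i a := by
      intro i
      have := hpq i i
      rw [hDdef, hdiag] at this
      linarith
    -- Cauchy-Schwarz: two isotropic vectors with positive product lie in the same half-cone.
    have hpp : ∀ i j, i ≠ j → 0 < p i * p j := by
      intro i j hij
      by_contra! hle
      have hlt : ∑ a, q i a * q j a < p i * p j := by
        have := hpq i j
        have := pow_pos (hpos i j hij) 2
        rw [← hDdef] at this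
        linarith
      have hcs := Finset.sum_mul_sq_le_sq_mul_sq Finset.univ (q i) (q j)
      simp only [pow_two, ← hDii] at hcs
      nlinarith
    obtain ⟨ε, hε, hεp⟩ : ∃ ε : ℝ, ε * ε = 1 ∧ ∀ i, 0 < ε * p i := by
      set i₀ : Fin m := ⟨0, by omega⟩ with hi₀
      have hne : p i₀ ≠ 0 :=
        left_ne_zero_of_mul (hpp i₀ ⟨1, by omega⟩ (by simp [hi₀])).ne'
      have key : ∀ i, 0 < p i₀ * p i := by
        intro i
        rcases eq_or_ne i₀ i with rfl | hi
        · exact mul_self_pos.mpr hne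
        · exact hpp _ _ hi
      rcases hne.lt_or_gt with h | h
      · exact ⟨-1, by norm_num, fun i => by nlinarith [neg_of_mul_pos_right (key i) h.le]⟩
      · exact ⟨1, by norm_num, fun i => by
          rw [one_mul]; exact pos_of_mul_pos_right (key i) h.le⟩
    set s : Fin m → EuclideanSpace ℝ (Fin (n - 1)) :=
      fun i => WithLp.toLp 2 fun a => ε * q i a.succ with hs
    have hinner : ∀ i j, inner ℝ (s i) (s j) = ∑ a : Fin (n - 1), q i a.succ * q j a.succ := by
      intro i j
      simp only [hs, PiLp.inner_apply, RCLike.inner_apply, conj_trivial]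
      refine Finset.sum_congr rfl fun a _ => ?_
      linear_combination (q i a.succ * q j a.succ) * hε
    have hsph : ∀ i, ∃ σ : KSphere n, σ.lightA = (ε * p i + ε * q i 0) / √2 ∧
        σ.lightC = (ε * p i - ε * q i 0) / √2 ∧ σ.lightS = (√2)⁻¹ • s i := by
      intro i
      refine exists_kSphere _ _ _ (hεp i) ?_
      have := hDii i
      rw [Fin.sum_univ_succ] at this
      rw [← real_inner_self_eq_norm_sq, hinner]
      linear_combination this + (p i ^ 2 - q i 0 ^ 2) * hε
    choose σ hA hC hS using hsph
    refine ⟨σ, fun i j => ?_⟩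
    have hd : 0 ≤ d i j := by
      rcases eq_or_ne i j with rfl | hij
      · exact (hdiag i).ge
      · exact (hpos i j hij).le
    refine (pow_left_inj₀ (dK_nonneg _ _) hd two_ne_zero).mp ?_
    rw [KSphere.dK_sq, hA, hA, hC, hC, hS, hS, real_inner_smul_left, real_inner_smul_right, hinner,
      ← hDdef, hpq, Fin.sum_univ_succ]
    have h2 : √(2 : ℝ) ^ 2 = 2 := Real.sq_sqrt (by norm_num)
    field_simp
    rw [h2]
    linear_combination 2 * (p i * p j - q i 0 * q j 0) * hε
end

section
/- Let n ≥ 2, let G = (V,E) be a finite simple graph containing a chordless (induced) cycle C of length at least 4, and let e₀ be an edge of C. Define ℓ : E → ℝ by ℓ(e) = 1 if e = e₀ or if e has exactly one endpoint among the vertices of C, and ℓ(e) = 0 otherwise. Then ℓ ∈ 𝒦ⁿ(G) but ℓ ∉ 𝒞ⁿ(G). -/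
/-- `(G, ℓ)` is completable in `(𝕂ⁿ, d_K)`: some placement of the vertices as
kissing spheres realizes `ℓ` on all edges. -/
def Completable (n : ℕ) {V : Type*} (G : SimpleGraph V) (ℓ : Sym2 V → ℝ) : Prop :=
  ∃ σ : V → KSphere n, ∀ u v : V, G.Adj u v → dK (σ u) (σ v) = ℓ s(u, v)

/-- `𝒞ⁿ(G)`: the set of nonnegative length functions on the edges of `G` such that
`(G, ℓ)` is completable in `(𝕂ⁿ, d_K)`. -/
def CSet (n : ℕ) {V : Type*} (G : SimpleGraph V) : Set (Sym2 V → ℝ) :=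
  {ℓ | (∀ e ∈ G.edgeSet, 0 ≤ ℓ e) ∧ Completable n G ℓ}

/-- `𝒦ⁿ(G)`: the set of nonnegative length functions on the edges of `G` such that
for every clique `K` of `G`, the complete graph on `K` with the restriction of `ℓ`
is completable in `(𝕂ⁿ, d_K)`. -/
def KSet (n : ℕ) {V : Type*} (G : SimpleGraph V) : Set (Sym2 V → ℝ) :=
  {ℓ | (∀ e ∈ G.edgeSet, 0 ≤ ℓ e) ∧
    ∀ K : Finset V, G.IsClique (K : Set V) →
      ∃ σ : V → KSphere n, ∀ u ∈ K, ∀ v ∈ K, u ≠ v → dK (σ u) (σ v) = ℓ s(u, v)}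

/-- The point of tangency of a kissing sphere with the hyperplane `x₀ = 0`; the value `none` is the
point at infinity, where the hyperplanes `x₀ = h` are tangent. -/
def KSphere.tangency {n : ℕ} : KSphere n → Option (EuclideanSpace ℝ (Fin (n - 1)))
  | .sphere _ t _ => some t
  | .plane _ _ => none

theorem dK_eq_zero_iff {n : ℕ} (x y : KSphere n) : dK x y = 0 ↔ x.tangency = y.tangency := by
  rcases x with ⟨φ, t, hφ⟩ | ⟨h, hh⟩ <;> rcases y with ⟨φ', t', hφ'⟩ | ⟨h', hh'⟩
  · have h0 : Real.sqrt (φ * φ') ≠ 0 := (Real.sqrt_pos.2 (mul_pos hφ hφ')).ne'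
    simp [dK, KSphere.tangency, h0, sub_eq_zero]
  · have h0 : Real.sqrt (h' / φ) ≠ 0 := (Real.sqrt_pos.2 (div_pos hh' hφ)).ne'
    simpa [dK, KSphere.tangency] using h0
  · have h0 : Real.sqrt (h / φ') ≠ 0 := (Real.sqrt_pos.2 (div_pos hh hφ')).ne'
    simpa [dK, KSphere.tangency] using h0
  · simp [dK, KSphere.tangency]

/-- A length function that vanishes on all edges of a cycle except one is not completable. -/
theorem not_completable_of_cycle {V : Type*} {n : ℕ} {G : SimpleGraph V} {u : V} {w : G.Walk u u}
    (hcyc : w.IsCycle) {e₀ : Sym2 V} (he₀ : e₀ ∈ w.edges) {ℓ : Sym2 V → ℝ} (hne : ℓ e₀ ≠ 0)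
    (hzero : ∀ e ∈ w.edges, e ≠ e₀ → ℓ e = 0) : ¬ Completable n G ℓ := by
  rintro ⟨σ, hσ⟩
  induction e₀ with | h a b => ?_
  -- Inside the graph formed by the edges of `w`, the edge `e₀` is not a bridge.
  let H : SimpleGraph V := SimpleGraph.fromEdgeSet {e | e ∈ w.edges}
  have hH : ∀ e ∈ w.edges, e ∈ H.edgeSet := fun e he => by
    rw [SimpleGraph.edgeSet_fromEdgeSet]
    exact ⟨he, G.not_isDiag_of_mem_edgeSet (w.edges_subset_edgeSet he)⟩
  have hreach := (SimpleGraph.adj_and_reachable_delete_edges_iff_exists_cycle (G := H)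
    (v := a) (w := b)).2 ⟨u, w.transfer H hH, hcyc.transfer hH, by simpa using he₀⟩
  have hconst : ∀ x y : V, (H \ SimpleGraph.fromEdgeSet {s(a, b)}).Walk x y →
      (σ x).tangency = (σ y).tangency := by
    intro x y p
    induction p with
    | nil => rfl
    | @cons x y z h p ih =>
      rw [← ih, ← dK_eq_zero_iff]
      rw [SimpleGraph.sdiff_adj, SimpleGraph.fromEdgeSet_adj, SimpleGraph.fromEdgeSet_adj] at h
      obtain ⟨⟨hxy, hd⟩, hn⟩ := h
      rw [hσ x y (w.adj_of_mem_edges hxy)]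
      exact hzero _ hxy fun h => hn ⟨h, hd⟩
  obtain ⟨p⟩ := hreach.2
  exact hne (by rw [← hσ a b (w.adj_of_mem_edges he₀), dK_eq_zero_iff]; exact hconst a b p)

/-- A vertex set that meets a walk and is closed under its edges contains all its vertices. -/
theorem support_subset_of_closed {V : Type*} {G : SimpleGraph V} {u v : V} (w : G.Walk u v)
    (S : Set V) (hS : ∀ x y : V, s(x, y) ∈ w.edges → x ∈ S → y ∈ S)
    {a : V} (ha : a ∈ w.support) (haS : a ∈ S) : ∀ x ∈ w.support, x ∈ S := by
  induction w generalizing a with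
  | nil => simp_all
  | @cons u v z h p ih =>
    have hS' : ∀ x y : V, s(x, y) ∈ p.edges → x ∈ S → y ∈ S :=
      fun x y hxy => hS x y (by simp [hxy])
    have huv : u ∈ S → v ∈ S := hS u v (by simp)
    have hvu : v ∈ S → u ∈ S := hS v u (by simp [Sym2.eq_swap])
    have key : ∀ x ∈ p.support, x ∈ S := by
      rw [SimpleGraph.Walk.support_cons, List.mem_cons] at ha
      rcases ha with rfl | ha
      · exact ih hS' p.start_mem_support (huv haS)
      · exact ih hS' ha haS
    intro x hx
    rw [SimpleGraph.Walk.support_cons, List.mem_cons] at hx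
    rcases hx with rfl | hx
    · exact hvu (key _ p.start_mem_support)
    · exact key x hx

/-- If the edges of a cycle contain a triangle, each vertex of the triangle already has its two
cycle neighbours there, so the cycle has no further vertices. -/
theorem no_triangle_of_four_le_length {V : Type*} {G : SimpleGraph V} {u : V} {w : G.Walk u u}
    (hcyc : w.IsCycle) (hlen : 4 ≤ w.length) {a b c : V}
    (hab : s(a, b) ∈ w.edges) (hac : s(a, c) ∈ w.edges) (hbc : s(b, c) ∈ w.edges) : False := by
  classical
  have nab := (w.adj_of_mem_edges hab).ne
  have nac := (w.adj_of_mem_edges hac).ne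
  have nbc := (w.adj_of_mem_edges hbc).ne
  have key : ∀ x y z t : V, y ≠ z → s(x, y) ∈ w.edges → s(x, z) ∈ w.edges → s(x, t) ∈ w.edges →
      t = y ∨ t = z := by
    intro x y z t hyz hy hz ht
    have h2 := hcyc.ncard_neighborSet_toSubgraph_eq_two (w.fst_mem_support_of_mem_edges hy)
    have hsub : ({y, z} : Set V) ⊆ w.toSubgraph.neighborSet x := by
      rintro r (rfl | rfl)
      · exact w.mem_edges_toSubgraph.2 hy
      · exact w.mem_edges_toSubgraph.2 hz
    have heq := Set.eq_of_subset_of_ncard_le hsub (by rw [h2, Set.ncard_pair hyz])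
      (Set.finite_of_ncard_ne_zero (by rw [h2]; norm_num))
    have : t ∈ w.toSubgraph.neighborSet x := w.mem_edges_toSubgraph.2 ht
    rw [← heq] at this
    simpa using this
  have hsupp := support_subset_of_closed w ({a, b, c} : Set V) (by
    have hba := Sym2.eq_swap (a := a) (b := b) ▸ hab
    have hca := Sym2.eq_swap (a := a) (b := c) ▸ hac
    have hcb := Sym2.eq_swap (a := b) (b := c) ▸ hbc
    rintro x y hxy (rfl | rfl | rfl)
    · rcases key _ _ _ y nbc hab hac hxy with rfl | rfl <;> simp
    · rcases key _ _ _ y nac hba hbc hxy with rfl | rfl <;> simp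
    · rcases key _ _ _ y nab hca hcb hxy with rfl | rfl <;> simp)
    (w.fst_mem_support_of_mem_edges hab) (by simp)
  have hcard : w.support.tail.toFinset.card ≤ ({a, b, c} : Finset V).card := by
    refine Finset.card_le_card fun x hx => ?_
    simpa using hsupp x (List.mem_of_mem_tail (List.mem_toFinset.1 hx))
  rw [List.toFinset_card_of_nodup hcyc.support_nodup, List.length_tail,
    SimpleGraph.Walk.length_support] at hcard
  have := Finset.card_le_three (a := a) (b := b) (c := c)
  omega

/-- given a chordless cycle `w` of length at least 4 in `G` and an edge
`e₀` of the cycle, the length function with value `1` on `e₀` and on edges with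
exactly one endpoint on the cycle, and `0` elsewhere, lies in `𝒦ⁿ(G)` but not in
`𝒞ⁿ(G)`. -/
theorem chordless_cycle_counterexample {V : Type} [Fintype V] [DecidableEq V]
    (n : ℕ) (hn : 2 ≤ n) (G : SimpleGraph V)
    (u : V) (w : G.Walk u u) (hcyc : w.IsCycle) (hlen : 4 ≤ w.length)
    (hchordless : ∀ a b : V, a ∈ w.support → b ∈ w.support → G.Adj a b →
      s(a, b) ∈ w.edges)
    (e₀ : Sym2 V) (he₀ : e₀ ∈ w.edges)
    (ℓ : Sym2 V → ℝ)
    (hone : ∀ e : Sym2 V,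
      (e = e₀ ∨ ∃ a b : V, e = s(a, b) ∧ a ∈ w.support ∧ b ∉ w.support) → ℓ e = 1)
    (hzero : ∀ e : Sym2 V,
      ¬(e = e₀ ∨ ∃ a b : V, e = s(a, b) ∧ a ∈ w.support ∧ b ∉ w.support) → ℓ e = 0) :
    ℓ ∈ KSet n G ∧ ℓ ∉ CSet n G := by
  have hcase : ∀ e, ℓ e = 0 ∨ ℓ e = 1 := fun e => by
    by_cases he : e = e₀ ∨ ∃ a b : V, e = s(a, b) ∧ a ∈ w.support ∧ b ∉ w.support
    · exact Or.inr (hone e he)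
    · exact Or.inl (hzero e he)
  have hmixed : ∀ a b : V, a ∈ w.support → b ∉ w.support → ℓ s(a, b) = 1 :=
    fun a b ha hb => hone _ (Or.inr ⟨a, b, rfl, ha, hb⟩)
  have hsame : ∀ a b : V, (a ∈ w.support ↔ b ∈ w.support) → s(a, b) ≠ e₀ → ℓ s(a, b) = 0 := by
    intro a b hab hne
    refine hzero _ ?_
    rintro (h | ⟨x, y, hxy, hx, hy⟩)
    · exact hne h
    · rcases Sym2.eq_iff.1 hxy with ⟨rfl, rfl⟩ | ⟨rfl, rfl⟩ <;> tauto
  refine ⟨⟨fun e _ => ?_, fun K hK => ?_⟩, fun hC => ?_⟩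
  · rcases hcase e with h | h <;> simp [h]
  · induction e₀ with | h a b => ?_
    have ha : a ∈ w.support := w.fst_mem_support_of_mem_edges he₀
    have hb : b ∈ w.support := w.snd_mem_support_of_mem_edges he₀
    have nab : a ≠ b := (w.adj_of_mem_edges he₀).ne
    -- Off the cycle all vertices go to one hyperplane; on it only the tangency points `t` vary.
    have build : ∀ t : V → EuclideanSpace ℝ (Fin (n - 1)),
        (∀ x ∈ K, ∀ y ∈ K, x ≠ y → x ∈ w.support → y ∈ w.support → ‖t x - t y‖ = ℓ s(x, y)) →
        ∃ σ : V → KSphere n, ∀ x ∈ K, ∀ y ∈ K, x ≠ y → dK (σ x) (σ y) = ℓ s(x, y) := by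
      intro t ht
      refine ⟨fun x => if x ∈ w.support then .sphere 1 (t x) one_pos else .plane 1 one_pos, ?_⟩
      intro x hx y hy hxy
      by_cases hxs : x ∈ w.support <;> by_cases hys : y ∈ w.support
      · simpa [hxs, hys, dK] using ht x hx y hy hxy hxs hys
      · simp [hxs, hys, dK, hmixed x y hxs hys]
      · simp [hxs, hys, dK, Sym2.eq_swap (a := x), hmixed y x hys hxs]
      · have hne : s(x, y) ≠ s(a, b) := by
          intro h
          rcases Sym2.eq_iff.1 h with ⟨rfl, rfl⟩ | ⟨rfl, rfl⟩ <;> exact hxs ‹_›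
        simp [hxs, hys, dK, hsame x y (by simp [hxs, hys]) hne]
    by_cases hKab : a ∈ K ∧ b ∈ K
    · have honly : ∀ x ∈ K, x ∈ w.support → x = a ∨ x = b := by
        intro x hx hxs
        by_contra! hne
        exact no_triangle_of_four_le_length hcyc hlen he₀
          (hchordless a x ha hxs (hK hKab.1 hx hne.1.symm))
          (hchordless b x hb hxs (hK hKab.2 hx hne.2.symm))
      have hn' : 0 < n - 1 := by omega
      have h1 : ℓ s(a, b) = 1 := hone _ (Or.inl rfl)
      refine build (fun x => if x = a then EuclideanSpace.single ⟨0, hn'⟩ 1 else 0) ?_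
      intro x hx y hy hxy hxs hys
      rcases honly x hx hxs with rfl | rfl <;> rcases honly y hy hys with rfl | rfl
      · exact absurd rfl hxy
      · simp [nab.symm, h1]
      · simp [nab.symm, Sym2.eq_swap (a := x), h1]
      · exact absurd rfl hxy
    · refine build (fun _ => 0) ?_
      intro x hx y hy _ hxs hys
      rw [hsame x y (by simp [hxs, hys])]
      · simp
      · intro h
        rcases Sym2.eq_iff.1 h with ⟨rfl, rfl⟩ | ⟨rfl, rfl⟩
        · exact hKab ⟨hx, hy⟩
        · exact hKab ⟨hy, hx⟩
  · refine not_completable_of_cycle hcyc he₀ (by simp [hone e₀ (Or.inl rfl)]) ?_ hC.2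
    intro e he hne
    induction e with | h x y => ?_
    exact hsame x y (iff_of_true (w.fst_mem_support_of_mem_edges he)
      (w.snd_mem_support_of_mem_edges he)) hne
end

section
/- Let n ≥ 1 and m ≥ 1, and let c_i ∈ ℝⁿ and r_i > 0 for i ∈ Fin m be a family of spheres in ℝⁿ (with centers c_i and radii r_i). Let D be the m × m real symmetric matrix with D i j = (‖c_i − c_j‖² − r_i² − r_j²)/(2 r_i r_j) (so in particular D i i = −1). Then D has at most one positive eigenvalue and at most n + 1 negative eigenvalues (counted with multiplicity). -/
/-!
Put `y i = x i / r i`. Expanding `‖c i - c j‖ ^ 2` writes the quadratic form of `D` as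
`x ⬝ᵥ D *ᵥ x = (∑ y i) * (∑ y i * (‖c i‖ ^ 2 - r i ^ 2)) - ‖∑ y i • c i‖ ^ 2`,
a difference `a * b - ‖v‖ ^ 2` of signature at most `(1, n + 1)` in the linear quantities
`a`, `b`, `v`. The form is nonpositive on the kernel of `a` (one linear condition) and nonnegative
on the common kernel of `a - b` and `v` (`n + 1` linear conditions). The counting lemma
`card_le_finrank_of_sign` turns this into bounds on the number of eigenvalues of each sign, since
the span of the corresponding eigenvectors meets such a kernel trivially.
-/

/-- In an orthonormal eigenbasis the quadratic form is diagonal. -/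
lemma dotProduct_mulVec_sum_eigenvectors {m : ℕ} {A : Matrix (Fin m) (Fin m) ℝ}
    (hA : A.IsHermitian) (S : Finset (Fin m)) (a : S → ℝ) :
    (∑ i : S, a i • (hA.eigenvectorBasis i : EuclideanSpace ℝ (Fin m)).ofLp) ⬝ᵥ
      A.mulVec (∑ i : S, a i • (hA.eigenvectorBasis i : EuclideanSpace ℝ (Fin m)).ofLp)
      = ∑ i : S, hA.eigenvalues i * a i ^ 2 := by
  have horth : ∀ i j : Fin m, (hA.eigenvectorBasis i).ofLp ⬝ᵥ (hA.eigenvectorBasis j).ofLp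
      = if i = j then 1 else 0 := by
    intro i j
    have h := orthonormal_iff_ite.mp hA.eigenvectorBasis.orthonormal j i
    rw [EuclideanSpace.inner_eq_star_dotProduct] at h
    simpa [eq_comm] using h
  simp only [Matrix.mulVec_sum, Matrix.mulVec_smul, hA.mulVec_eigenvectorBasis, sum_dotProduct,
    dotProduct_sum, smul_dotProduct, dotProduct_smul, horth, smul_eq_mul, Subtype.coe_inj]
  refine Finset.sum_congr rfl fun i _ => ?_
  simp
  ring

/-- If the quadratic form of `A`, multiplied by `ε`, is nonnegative on the kernel of `φ`, then at
most `finrank W` eigenvalues satisfy `ε * λ < 0`: otherwise `φ` would kill a nonzero combination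
of their eigenvectors, on which `ε` times the form is negative. -/
lemma card_le_finrank_of_sign {m : ℕ} {A : Matrix (Fin m) (Fin m) ℝ}
    (hA : A.IsHermitian) {W : Type*} [AddCommGroup W] [Module ℝ W] [FiniteDimensional ℝ W]
    (φ : (Fin m → ℝ) →ₗ[ℝ] W) (ε : ℝ)
    (hφ : ∀ x, φ x = 0 → 0 ≤ ε * (x ⬝ᵥ A.mulVec x))
    (S : Finset (Fin m)) (hS : ∀ i ∈ S, ε * hA.eigenvalues i < 0) :
    S.card ≤ Module.finrank ℝ W := by
  by_contra! hlt
  let ψ : (S → ℝ) →ₗ[ℝ] (Fin m → ℝ) :=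
    Fintype.linearCombination ℝ fun i : S => (hA.eigenvectorBasis i).ofLp
  have hker : LinearMap.ker (φ ∘ₗ ψ) ≠ ⊥ :=
    LinearMap.ker_ne_bot_of_finrank_lt (by simpa using hlt)
  obtain ⟨a, ha, ha0⟩ := Submodule.exists_mem_ne_zero_of_ne_bot hker
  have h := hφ (ψ a) (by simpa using ha)
  simp only [ψ, Fintype.linearCombination_apply] at h
  rw [dotProduct_mulVec_sum_eigenvectors, Finset.mul_sum] at h
  obtain ⟨k, hk⟩ := Function.ne_iff.mp ha0
  refine absurd h (not_le.mpr (Finset.sum_neg' (fun i _ => ?_) ⟨k, Finset.mem_univ k, ?_⟩))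
  · nlinarith [hS i i.2, sq_nonneg (a i)]
  · have : 0 < a k ^ 2 := by
      have : a k ≠ 0 := hk
      positivity
    nlinarith [hS k k.2]

/-- The quadratic form of the separation matrix as `a * b - ‖v‖ ^ 2`. -/
lemma separation_form {n m : ℕ} (c : Fin m → EuclideanSpace ℝ (Fin n)) (r : Fin m → ℝ)
    (hr : ∀ i, 0 < r i) (D : Matrix (Fin m) (Fin m) ℝ)
    (hDdef : ∀ i j, D i j = (‖c i - c j‖ ^ 2 - (r i) ^ 2 - (r j) ^ 2) / (2 * r i * r j))
    (x : Fin m → ℝ) :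
    x ⬝ᵥ D.mulVec x = (∑ i, x i * (r i)⁻¹) * (∑ i, x i * ((r i)⁻¹ * (‖c i‖ ^ 2 - r i ^ 2)))
      - ‖∑ i, x i • (r i)⁻¹ • c i‖ ^ 2 := by
  -- Symmetrizing the product in `i` and `j` matches the two sides term by term.
  have hsymm : (∑ i, x i * (r i)⁻¹) * (∑ i, x i * ((r i)⁻¹ * (‖c i‖ ^ 2 - r i ^ 2)))
      = ∑ i, ∑ j, (x i * (r i)⁻¹ * (x j * ((r j)⁻¹ * (‖c j‖ ^ 2 - r j ^ 2)))
        + x j * (r j)⁻¹ * (x i * ((r i)⁻¹ * (‖c i‖ ^ 2 - r i ^ 2)))) / 2 := by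
    simp only [← Finset.sum_div, Finset.sum_add_distrib]
    rw [Finset.sum_comm (f := fun i j => x j * (r j)⁻¹ * (x i * ((r i)⁻¹ * (‖c i‖ ^ 2 - r i ^ 2))))]
    rw [Finset.sum_mul_sum]
    ring
  rw [hsymm, ← real_inner_self_eq_norm_sq]
  simp only [sum_inner, inner_sum, real_inner_smul_left, real_inner_smul_right,
    ← Finset.sum_sub_distrib, dotProduct, Matrix.mulVec, Finset.mul_sum]
  refine Finset.sum_congr rfl fun i _ => Finset.sum_congr rfl fun j _ => ?_
  have hi := (hr i).ne'
  have hj := (hr j).ne'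
  rw [hDdef, norm_sub_sq_real, real_inner_comm]
  field_simp
  ring

/-- the Darboux separation matrix
`D i j = (‖c_i − c_j‖² − r_i² − r_j²)/(2 r_i r_j)` of a family of spheres in `ℝⁿ`
has at most one positive eigenvalue and at most `n + 1` negative eigenvalues. -/
theorem sphere_separation_matrix_eigenvalues (n m : ℕ) (hn : 1 ≤ n) (hm : 1 ≤ m)
    (c : Fin m → EuclideanSpace ℝ (Fin n)) (r : Fin m → ℝ) (hr : ∀ i, 0 < r i)
    (D : Matrix (Fin m) (Fin m) ℝ)
    (hDdef : ∀ i j, D i j = (‖c i - c j‖ ^ 2 - (r i) ^ 2 - (r j) ^ 2) / (2 * r i * r j))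
    (hD : D.IsHermitian) :
    (Finset.univ.filter fun i => 0 < hD.eigenvalues i).card ≤ 1 ∧
      (Finset.univ.filter fun i => hD.eigenvalues i < 0).card ≤ n + 1 := by
  let a : (Fin m → ℝ) →ₗ[ℝ] ℝ := Fintype.linearCombination ℝ fun i => (r i)⁻¹
  let b : (Fin m → ℝ) →ₗ[ℝ] ℝ :=
    Fintype.linearCombination ℝ fun i => (r i)⁻¹ * (‖c i‖ ^ 2 - r i ^ 2)
  let v : (Fin m → ℝ) →ₗ[ℝ] EuclideanSpace ℝ (Fin n) :=
    Fintype.linearCombination ℝ fun i => (r i)⁻¹ • c i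
  have hform : ∀ x, x ⬝ᵥ D.mulVec x = a x * b x - ‖v x‖ ^ 2 :=
    separation_form c r hr D hDdef
  constructor
  · have h := card_le_finrank_of_sign hD a (-1) (fun x hx => ?_)
      (Finset.univ.filter fun i => 0 < hD.eigenvalues i) (by simp)
    · simpa using h
    · rw [hform, hx]
      nlinarith [sq_nonneg ‖v x‖]
  · have h := card_le_finrank_of_sign hD (v.prod (a - b)) 1 (fun x hx => ?_)
      (Finset.univ.filter fun i => hD.eigenvalues i < 0) (by simp)
    · simpa using h
    · have hv : v x = 0 := congrArg Prod.fst hx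
      have hab : a x - b x = 0 := congrArg Prod.snd hx
      rw [hform, hv, sub_eq_zero.mp hab, norm_zero]
      nlinarith [mul_self_nonneg (b x)]
end
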